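/- Let 0 < r ≤ 1 ≤ R and τ > 0, let λ be one of the four phases λ_{ε₁,ε₂}, and define, for ξ with ξ_h ≠ 0, M(τ,ξ) = [1/(1 + τ|a_λ(ξ)|²) + i (∂_{ξ₂} a_λ(ξ)) (1 − τ|a_λ(ξ)|²)/(1 + τ|a_λ(ξ)|²)²] Ψ_{r,R}(ξ) + (i a_λ(ξ)/(1 + τ|a_λ(ξ)|²)) ∂_{ξ₂} Ψ_{r,R}(ξ). Then there exists a constant C > 0, depending only on γ̄ and ψ, such that for all such ξ, |M(τ,ξ)| ≤ C r^{−1} / (1 + R^{−6} r² τ ξ₂²). -/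

import Mathlib

/- Common setup: the space ℝ³ (as a Euclidean space), Fourier transform,
   partial derivatives, Sobolev-type norms. -/

noncomputable section

open MeasureTheory Real Complex Filter ENNReal

/-- The space `ℝ³`. -/
abbrev E3 : Type := EuclideanSpace ℝ (Fin 3)

/-- Fourier transform on `ℝ³`. -/
def FT (f : E3 → ℂ) : E3 → ℂ := FourierTransform.fourier f

/-- Inverse Fourier transform on `ℝ³`. -/
def FTinv (f : E3 → ℂ) : E3 → ℂ := FourierTransformInv.fourierInv f

/-- The point `(x₁, x₂, x₃) ∈ ℝ³`. -/
def pt (x1 x2 x3 : ℝ) : E3 := (EuclideanSpace.equiv (Fin 3) ℝ).symm ![x1, x2, x3]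

/-- Fourier transform of a real-valued function. -/
def FTr (f : E3 → ℝ) : E3 → ℂ := FT (fun x => (f x : ℂ))

/-- Partial derivative `∂ᵢ` of a real-valued function. -/
def pd (i : Fin 3) (f : E3 → ℝ) (x : E3) : ℝ := fderiv ℝ f x (EuclideanSpace.single i 1)

/-- Partial derivative `∂ᵢ` of a complex-valued function. -/
def pdC (i : Fin 3) (f : E3 → ℂ) (x : E3) : ℂ := fderiv ℝ f x (EuclideanSpace.single i 1)

/-- A smooth cut-off function `ψ` with values in `[0,1]`, equal to `1` on `(-∞,1]`
and to `0` on `[2,∞)`. -/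
def IsCutoff (ψ : ℝ → ℝ) : Prop :=
  ContDiff ℝ (⊤ : ℕ∞) ψ ∧ (∀ x, ψ x ∈ Set.Icc (0:ℝ) 1) ∧ (∀ x ≤ (1:ℝ), ψ x = 1) ∧
    (∀ x, (2:ℝ) ≤ x → ψ x = 0)

/-- The norm `|ξ_h|` of the horizontal component of a frequency `ξ`. -/
def xih (ξ : E3) : ℝ := Real.sqrt (ξ 0 ^ 2 + ξ 1 ^ 2)

/-- The frequency cut-off function `Ψ_{r,R}`. -/
def Psi (ψ : ℝ → ℝ) (r R : ℝ) (ξ : E3) : ℝ :=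
  ψ (‖ξ‖ / R) * ((1 - ψ (xih ξ / r)) * (1 - ψ (|ξ 2| / r)))

/-- The set `C_{r,R} = {ξ : |ξ| ≤ R, |ξ_h| ≥ r, |ξ₃| ≥ r}`. -/
def CrR (r R : ℝ) : Set E3 := {ξ | ‖ξ‖ ≤ R ∧ r ≤ xih ξ ∧ r ≤ |ξ 2|}

/-- The frequency cut-off operator `Ψ_{r,R}(D) g = 𝓕⁻¹(Ψ_{r,R} ĝ)`. -/
def PsiD (ψ : ℝ → ℝ) (r R : ℝ) (g : E3 → ℂ) : E3 → ℂ :=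
  FTinv (fun ξ => (Psi ψ r R ξ : ℂ) * FT g ξ)

/-- The eigenvalues `λ_{ε₁,ε₂}(ξ)` of `B̂(ξ)`. -/
def lamEV (γ ε1 ε2 : ℝ) (ξ : E3) : ℂ :=
  (ε1 : ℂ) * (Complex.I / 2) *
    (((Real.sqrt (1 + γ ^ 2 * ‖ξ‖ ^ 2 + 2 * γ * ξ 2) +
      ε2 * Real.sqrt (1 + γ ^ 2 * ‖ξ‖ ^ 2 - 2 * γ * ξ 2)) : ℝ) : ℂ)

/-- The derivative `a_λ(ξ) = ∂_{ξ₂} λ_{ε₁,ε₂}(ξ) = ε₁ (iγ̄²ξ₂/2)(1/A(ξ) + ε₂/B(ξ))`. -/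
def aLam (γ ε1 ε2 : ℝ) (ξ : E3) : ℂ :=
  (ε1 : ℂ) * (Complex.I * ((γ ^ 2 * ξ 1 : ℝ) : ℂ) / 2) *
    (((1 / Real.sqrt (1 + γ ^ 2 * ‖ξ‖ ^ 2 + 2 * γ * ξ 2) +
      ε2 / Real.sqrt (1 + γ ^ 2 * ‖ξ‖ ^ 2 - 2 * γ * ξ 2)) : ℝ) : ℂ)

/-- The quantity `M(τ,ξ) = [1/(1+τ|a_λ|²) + i(∂_{ξ₂}a_λ)(1−τ|a_λ|²)/(1+τ|a_λ|²)²] Ψ_{r,R}(ξ)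
+ (i a_λ/(1+τ|a_λ|²)) ∂_{ξ₂}Ψ_{r,R}(ξ)`. -/
def Mker (ψ : ℝ → ℝ) (r R γ ε1 ε2 τ : ℝ) (ξ : E3) : ℂ :=
  (((1 / (1 + τ * ‖aLam γ ε1 ε2 ξ‖ ^ 2) : ℝ) : ℂ) +
      Complex.I * (fderiv ℝ (aLam γ ε1 ε2) ξ (EuclideanSpace.single 1 1)) *
        (((1 - τ * ‖aLam γ ε1 ε2 ξ‖ ^ 2) /
          (1 + τ * ‖aLam γ ε1 ε2 ξ‖ ^ 2) ^ 2 : ℝ) : ℂ)) * ((Psi ψ r R ξ : ℝ) : ℂ) +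
    Complex.I * aLam γ ε1 ε2 ξ / (((1 + τ * ‖aLam γ ε1 ε2 ξ‖ ^ 2 : ℝ)) : ℂ) *
      ((fderiv ℝ (Psi ψ r R) ξ (EuclideanSpace.single 1 1) : ℝ) : ℂ)


lemma hasDerivAt_phi (γ p x : ℝ) (h : 0 < p + γ ^ 2 * x ^ 2) :
    HasDerivAt (fun y : ℝ => y / Real.sqrt (p + γ ^ 2 * y ^ 2))
      (p / Real.sqrt (p + γ ^ 2 * x ^ 2) ^ 3) x := by
  have h1 : HasDerivAt (fun y : ℝ => p + γ ^ 2 * y ^ 2) (γ ^ 2 * (2 * x)) x := by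
    have := ((hasDerivAt_pow 2 x).const_mul (γ ^ 2)).const_add p
    simpa using this
  have hs : 0 < Real.sqrt (p + γ ^ 2 * x ^ 2) := Real.sqrt_pos.mpr h
  have h2 := (hasDerivAt_id x).div (h1.sqrt h.ne') hs.ne'
  refine HasDerivAt.congr_deriv h2 ?_
  show (1 * Real.sqrt (p + γ ^ 2 * x ^ 2) - x * (γ ^ 2 * (2 * x) / (2 * Real.sqrt (p + γ ^ 2 * x ^ 2)))) /
    Real.sqrt (p + γ ^ 2 * x ^ 2) ^ 2 = _
  have hq : Real.sqrt (p + γ ^ 2 * x ^ 2) ^ 2 = p + γ ^ 2 * x ^ 2 := Real.sq_sqrt h.le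
  have hp : p = Real.sqrt (p + γ ^ 2 * x ^ 2) ^ 2 - γ ^ 2 * x ^ 2 := by rw [hq]; ring
  clear h2
  generalize Real.sqrt (p + γ ^ 2 * x ^ 2) = s at *
  rw [hp]
  field_simp

lemma norm_sq_E3 (ξ : E3) : ‖ξ‖ ^ 2 = ξ 0 ^ 2 + ξ 1 ^ 2 + ξ 2 ^ 2 := by
  rw [EuclideanSpace.norm_sq_eq, Fin.sum_univ_three]
  simp

lemma aLam_eq (γ ε1 ε2 : ℝ) (ξ : E3) : aLam γ ε1 ε2 ξ =
    ((ε1 : ℂ) * Complex.I * ((γ ^ 2 / 2 : ℝ) : ℂ)) *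
      (((ξ 1 / Real.sqrt ((γ ^ 2 * ξ 0 ^ 2 + (1 + γ * ξ 2) ^ 2) + γ ^ 2 * ξ 1 ^ 2) +
        ε2 * (ξ 1 / Real.sqrt ((γ ^ 2 * ξ 0 ^ 2 + (1 - γ * ξ 2) ^ 2) + γ ^ 2 * ξ 1 ^ 2)) : ℝ)) : ℂ) := by
  unfold aLam
  rw [norm_sq_E3]
  have e1 : 1 + γ ^ 2 * (ξ 0 ^ 2 + ξ 1 ^ 2 + ξ 2 ^ 2) + 2 * γ * ξ 2 =
    (γ ^ 2 * ξ 0 ^ 2 + (1 + γ * ξ 2) ^ 2) + γ ^ 2 * ξ 1 ^ 2 := by ring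
  have e2 : 1 + γ ^ 2 * (ξ 0 ^ 2 + ξ 1 ^ 2 + ξ 2 ^ 2) - 2 * γ * ξ 2 =
    (γ ^ 2 * ξ 0 ^ 2 + (1 - γ * ξ 2) ^ 2) + γ ^ 2 * ξ 1 ^ 2 := by ring
  rw [e1, e2]
  push_cast
  ring

lemma norm_coef (γ ε1 : ℝ) (h1 : ε1 = 1 ∨ ε1 = -1) :
    ‖((ε1 : ℂ) * Complex.I * ((γ ^ 2 / 2 : ℝ) : ℂ))‖ = γ ^ 2 / 2 := by
  have : |ε1| = 1 := by rcases h1 with h | h <;> simp [h]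
  rw [norm_mul, norm_mul, Complex.norm_I, Complex.norm_real, Complex.norm_real,
    Real.norm_eq_abs, Real.norm_eq_abs, this, abs_of_nonneg (by positivity)]
  ring

lemma fderiv_aLam_bound (γ : ℝ) (hγ : 0 < γ) (r : ℝ) (hr : 0 < r) (ε1 ε2 : ℝ)
    (h1 : ε1 = 1 ∨ ε1 = -1) (h2 : ε2 = 1 ∨ ε2 = -1) (ξ : E3) (hξ : r ≤ xih ξ) :
    ‖fderiv ℝ (aLam γ ε1 ε2) ξ (EuclideanSpace.single 1 1)‖ ≤ γ * r⁻¹ := by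
  by_cases hd : DifferentiableAt ℝ (aLam γ ε1 ε2) ξ
  swap
  · rw [fderiv_zero_of_not_differentiableAt hd]
    simp; positivity
  have hh : r ^ 2 ≤ ξ 0 ^ 2 + ξ 1 ^ 2 := by
    unfold xih at hξ
    exact (Real.le_sqrt' hr).mp hξ
  have key : ∀ p : ℝ, γ ^ 2 * ξ 0 ^ 2 ≤ p →
      0 < p + γ ^ 2 * ξ 1 ^ 2 ∧ |p / Real.sqrt (p + γ ^ 2 * ξ 1 ^ 2) ^ 3| ≤ γ⁻¹ * r⁻¹ := by
    intro p hp
    have hge : (γ * r) ^ 2 ≤ p + γ ^ 2 * ξ 1 ^ 2 := by nlinarith [mul_le_mul_of_nonneg_left hh (sq_nonneg γ)]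
    have hgr : 0 < γ * r := by positivity
    have hpos : 0 < p + γ ^ 2 * ξ 1 ^ 2 := lt_of_lt_of_le (by positivity) hge
    have hp0 : 0 ≤ p := le_trans (by positivity) hp
    refine ⟨hpos, ?_⟩
    have hs := Real.le_sqrt_of_sq_le hge
    have hq := Real.sq_sqrt hpos.le
    set s := Real.sqrt (p + γ ^ 2 * ξ 1 ^ 2)
    have hs0 : 0 < s := lt_of_lt_of_le hgr hs
    rw [abs_of_nonneg (by positivity), ← mul_inv]
    calc p / s ^ 3 ≤ s ^ 2 / s ^ 3 := by
          gcongr; nlinarith [sq_nonneg (γ * ξ 1)]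
      _ = s⁻¹ := by field_simp
      _ ≤ (γ * r)⁻¹ := by gcongr
  obtain ⟨pa, ba⟩ := key (γ ^ 2 * ξ 0 ^ 2 + (1 + γ * ξ 2) ^ 2) (by nlinarith [sq_nonneg (1 + γ * ξ 2)])
  obtain ⟨pb, bb⟩ := key (γ ^ 2 * ξ 0 ^ 2 + (1 - γ * ξ 2) ^ 2) (by nlinarith [sq_nonneg (1 - γ * ξ 2)])
  have hda := hasDerivAt_phi γ _ _ pa
  have hdb := hasDerivAt_phi γ _ _ pb
  have hsum := ((hda.add (hdb.const_mul ε2)).ofReal_comp).const_mul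
    ((ε1 : ℂ) * Complex.I * ((γ ^ 2 / 2 : ℝ) : ℂ))
  have hline : HasDerivAt (fun t : ℝ => ξ + (t - ξ 1) • (EuclideanSpace.single 1 1 : E3))
      (EuclideanSpace.single 1 1 : E3) (ξ 1) := by
    have := (((hasDerivAt_id (ξ 1)).sub_const (ξ 1)).smul_const
      (EuclideanSpace.single 1 1 : E3)).const_add ξ
    simpa using this
  have hcomp : HasDerivAt (fun t : ℝ => aLam γ ε1 ε2 (ξ + (t - ξ 1) • (EuclideanSpace.single 1 1 : E3)))
      (fderiv ℝ (aLam γ ε1 ε2) ξ (EuclideanSpace.single 1 1)) (ξ 1) := by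
    have hf : HasFDerivAt (aLam γ ε1 ε2) (fderiv ℝ (aLam γ ε1 ε2) ξ)
      (ξ + (ξ 1 - ξ 1) • (EuclideanSpace.single 1 1 : E3)) := by simpa using hd.hasFDerivAt
    exact hf.comp_hasDerivAt (ξ 1) hline
  have heq : (fun t : ℝ => aLam γ ε1 ε2 (ξ + (t - ξ 1) • (EuclideanSpace.single 1 1 : E3))) =
    fun t : ℝ => ((ε1 : ℂ) * Complex.I * ((γ ^ 2 / 2 : ℝ) : ℂ)) *
      (((t / Real.sqrt ((γ ^ 2 * ξ 0 ^ 2 + (1 + γ * ξ 2) ^ 2) + γ ^ 2 * t ^ 2) +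
        ε2 * (t / Real.sqrt ((γ ^ 2 * ξ 0 ^ 2 + (1 - γ * ξ 2) ^ 2) + γ ^ 2 * t ^ 2)) : ℝ)) : ℂ) := by
    funext t
    rw [aLam_eq]
    simp
  rw [heq] at hcomp
  have hu := hcomp.unique hsum
  rw [hu, norm_mul, norm_coef γ ε1 h1, Complex.norm_real, Real.norm_eq_abs]
  have hε : |ε2| = 1 := by rcases h2 with h | h <;> simp [h]
  have := abs_add_le ((γ ^ 2 * ξ 0 ^ 2 + (1 + γ * ξ 2) ^ 2) / Real.sqrt ((γ ^ 2 * ξ 0 ^ 2 + (1 + γ * ξ 2) ^ 2) + γ ^ 2 * ξ 1 ^ 2) ^ 3)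
    (ε2 * ((γ ^ 2 * ξ 0 ^ 2 + (1 - γ * ξ 2) ^ 2) / Real.sqrt ((γ ^ 2 * ξ 0 ^ 2 + (1 - γ * ξ 2) ^ 2) + γ ^ 2 * ξ 1 ^ 2) ^ 3))
  rw [abs_mul ε2, hε, one_mul] at this
  calc γ ^ 2 / 2 * _ ≤ γ ^ 2 / 2 * (γ⁻¹ * r⁻¹ + γ⁻¹ * r⁻¹) := by
        gcongr
        linarith
    _ = γ * r⁻¹ := by field_simp; ring

lemma aLam_upper (γ : ℝ) (hγ : 0 < γ) (ε1 ε2 : ℝ)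
    (h1 : ε1 = 1 ∨ ε1 = -1) (h2 : ε2 = 1 ∨ ε2 = -1) (ξ : E3) :
    ‖aLam γ ε1 ε2 ξ‖ ≤ γ := by
  rw [aLam_eq, norm_mul, norm_coef γ ε1 h1, Complex.norm_real, Real.norm_eq_abs]
  have hε : |ε2| = 1 := by rcases h2 with h | h <;> simp [h]
  have key : ∀ p : ℝ, 0 ≤ p → |ξ 1 / Real.sqrt (p + γ ^ 2 * ξ 1 ^ 2)| ≤ γ⁻¹ := by
    intro p hp
    rw [abs_div, abs_of_nonneg (Real.sqrt_nonneg _)]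
    apply div_le_of_le_mul₀ (Real.sqrt_nonneg _) (by positivity)
    have : γ * |ξ 1| ≤ Real.sqrt (p + γ ^ 2 * ξ 1 ^ 2) := by
      apply Real.le_sqrt_of_sq_le
      rw [mul_pow, sq_abs]; linarith
    calc |ξ 1| = γ⁻¹ * (γ * |ξ 1|) := by field_simp
      _ ≤ _ := by gcongr
  have ka := key (γ ^ 2 * ξ 0 ^ 2 + (1 + γ * ξ 2) ^ 2) (by positivity)
  have kb := key (γ ^ 2 * ξ 0 ^ 2 + (1 - γ * ξ 2) ^ 2) (by positivity)
  have := abs_add_le (ξ 1 / Real.sqrt ((γ ^ 2 * ξ 0 ^ 2 + (1 + γ * ξ 2) ^ 2) + γ ^ 2 * ξ 1 ^ 2))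
    (ε2 * (ξ 1 / Real.sqrt ((γ ^ 2 * ξ 0 ^ 2 + (1 - γ * ξ 2) ^ 2) + γ ^ 2 * ξ 1 ^ 2)))
  rw [abs_mul ε2, hε, one_mul] at this
  calc γ ^ 2 / 2 * _ ≤ γ ^ 2 / 2 * (γ⁻¹ + γ⁻¹) := by
        gcongr
        linarith
    _ = γ := by field_simp; ring

set_option maxHeartbeats 2000000 in
lemma aLam_lower (γ : ℝ) (hγ : 0 < γ) (r R : ℝ) (hr : 0 < r) (hr1 : r ≤ 1) (hR : 1 ≤ R)
    (ε1 ε2 : ℝ) (h1 : ε1 = 1 ∨ ε1 = -1) (h2 : ε2 = 1 ∨ ε2 = -1) (ξ : E3)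
    (hn : ‖ξ‖ ≤ 2 * R) (hξ : r ≤ xih ξ) (hξ3 : r ≤ |ξ 2|) :
    (γ / (1 + 2 * γ)) ^ 3 * (r / R ^ 3) * |ξ 1| ≤ ‖aLam γ ε1 ε2 ξ‖ := by
  rw [aLam_eq, norm_mul, norm_coef γ ε1 h1, Complex.norm_real, Real.norm_eq_abs]
  have hh : r ^ 2 ≤ ξ 0 ^ 2 + ξ 1 ^ 2 := by
    unfold xih at hξ
    exact (Real.le_sqrt' hr).mp hξ
  have hn2 := norm_sq_E3 ξ
  have hn3 : ξ 0 ^ 2 + ξ 1 ^ 2 + ξ 2 ^ 2 ≤ (2 * R) ^ 2 := by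
    rw [← hn2]; gcongr
  have h3 : |ξ 2| ≤ 2 * R := by
    have h4 : ξ 2 ^ 2 ≤ (2 * R) ^ 2 := by nlinarith [sq_nonneg (ξ 0), sq_nonneg (ξ 1)]
    exact abs_le_of_sq_le_sq h4 (by positivity)
  have hgh : γ ^ 2 * r ^ 2 ≤ γ ^ 2 * (ξ 0 ^ 2 + ξ 1 ^ 2) := by gcongr
  have hgn : γ ^ 2 * (ξ 0 ^ 2 + ξ 1 ^ 2 + ξ 2 ^ 2) ≤ γ ^ 2 * (2 * R) ^ 2 := by gcongr
  have hgr : 0 < γ ^ 2 * r ^ 2 := by positivity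
  have hR0 : 0 < R := by linarith
  have key : ∀ z : ℝ, |z| = |ξ 2| →
      0 < Real.sqrt ((γ ^ 2 * ξ 0 ^ 2 + (1 + γ * z) ^ 2) + γ ^ 2 * ξ 1 ^ 2) ∧
      Real.sqrt ((γ ^ 2 * ξ 0 ^ 2 + (1 + γ * z) ^ 2) + γ ^ 2 * ξ 1 ^ 2) ≤ (1 + 2 * γ) * R := by
    intro z hz
    constructor
    · apply Real.sqrt_pos.mpr
      nlinarith [sq_nonneg (1 + γ * z)]
    · apply Real.sqrt_le_iff.mpr
      refine ⟨by positivity, ?_⟩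
      have hz1 : z ≤ 2 * R := le_trans (le_abs_self z) (hz ▸ h3)
      have hz2 : z ^ 2 = ξ 2 ^ 2 := by rw [← sq_abs z, hz, sq_abs]
      have : γ * z ≤ γ * (2 * R) := by gcongr
      have h5 : γ * R ≤ γ * R * R := by nlinarith [mul_pos hγ hR0]
      nlinarith
  obtain ⟨pa, ba⟩ := key (ξ 2) rfl
  obtain ⟨pb, bb⟩ := key (-ξ 2) (abs_neg _)
  have hneg : (1 + γ * (-ξ 2)) = 1 - γ * ξ 2 := by ring
  rw [hneg] at pb bb
  have qa := Real.sq_sqrt (Real.sqrt_pos.mp pa).le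
  have qb := Real.sq_sqrt (Real.sqrt_pos.mp pb).le
  set A := Real.sqrt ((γ ^ 2 * ξ 0 ^ 2 + (1 + γ * ξ 2) ^ 2) + γ ^ 2 * ξ 1 ^ 2)
  set B := Real.sqrt ((γ ^ 2 * ξ 0 ^ 2 + (1 - γ * ξ 2) ^ 2) + γ ^ 2 * ξ 1 ^ 2)
  have hfac : ξ 1 / A + ε2 * (ξ 1 / B) = ξ 1 * (1 / A + ε2 / B) := by ring
  rw [hfac, abs_mul]
  have hD : 0 < 1 + 2 * γ := by positivity
  have main : 2 * γ / (1 + 2 * γ) ^ 3 * (r / R ^ 3) ≤ |1 / A + ε2 / B| := by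
    rcases h2 with h | h
    · rw [h]
      rw [abs_of_pos (by positivity)]
      have : 2 * γ / (1 + 2 * γ) ^ 3 * (r / R ^ 3) ≤ 1 / ((1 + 2 * γ) * R) := by
        rw [div_mul_div_comm, div_le_div_iff₀ (by positivity) (by positivity)]
        have e1 : r * 1 ≤ 1 * R ^ 2 := by
          have := one_le_pow₀ hR (n := 2)
          nlinarith
        have e2 : 2 * γ ≤ (1 + 2 * γ) ^ 2 := by nlinarith
        have e3 : 2 * γ * r ≤ (1 + 2 * γ) ^ 2 * R ^ 2 := by
          apply mul_le_mul e2 (by linarith) hr.le (by positivity)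
        nlinarith [mul_le_mul_of_nonneg_right e3 (by positivity : 0 ≤ (1 + 2 * γ) * R)]
      have h6 : 1 / ((1 + 2 * γ) * R) ≤ 1 / A := by gcongr
      have : 0 < 1 / B := by positivity
      linarith
    · rw [h]
      have e : 1 / A + -1 / B = -(4 * γ * ξ 2) / (A * B * (A + B)) := by
        have hBA : -(4 * γ * ξ 2) = B ^ 2 - A ^ 2 := by rw [qa, qb]; ring
        rw [hBA]
        clear_value A B
        field_simp
        ring
      rw [e, abs_div, abs_neg, abs_mul, abs_of_pos (by positivity : 0 < 4 * γ),
        abs_of_pos (by positivity : 0 < A * B * (A + B))]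
      calc 2 * γ / (1 + 2 * γ) ^ 3 * (r / R ^ 3)
          = 4 * γ * r / (((1 + 2 * γ) * R) * ((1 + 2 * γ) * R) * ((1 + 2 * γ) * R + (1 + 2 * γ) * R)) := by
            field_simp; ring
        _ ≤ 4 * γ * |ξ 2| / (A * B * (A + B)) := by gcongr
  calc (γ / (1 + 2 * γ)) ^ 3 * (r / R ^ 3) * |ξ 1|
      = γ ^ 2 / 2 * (|ξ 1| * (2 * γ / (1 + 2 * γ) ^ 3 * (r / R ^ 3))) := by
        field_simp
    _ ≤ _ := by gcongr

lemma cutoff_lip (ψ : ℝ → ℝ) (hψ : IsCutoff ψ) :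
    ∃ K : ℝ, 0 < K ∧ ∀ x y, |ψ x - ψ y| ≤ K * |x - y| := by
  obtain ⟨hs, hb, h1, h2⟩ := hψ
  have hc : Continuous (deriv ψ) := hs.continuous_deriv (by simp)
  obtain ⟨K, hK⟩ := isCompact_Icc.exists_bound_of_continuousOn (s := Set.Icc (0:ℝ) 3) hc.continuousOn
  have hK0 : 0 ≤ K := le_trans (norm_nonneg _) (hK 0 (by simp))
  refine ⟨K + 1, by linarith, fun x y => ?_⟩
  have hall : ∀ x, ‖deriv ψ x‖ ≤ K + 1 := by
    intro x
    by_cases hx : x ∈ Set.Icc (0:ℝ) 3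
    · linarith [hK x hx]
    · have : deriv ψ x = 0 := by
        rw [Set.mem_Icc, not_and_or] at hx
        rcases hx with hx | hx
        · have : ψ =ᶠ[nhds x] fun _ => 1 := by
            filter_upwards [Iio_mem_nhds (show x < 1 by linarith)] with z hz
            exact h1 z (le_of_lt hz)
          rw [this.deriv_eq]; simp
        · have : ψ =ᶠ[nhds x] fun _ => 0 := by
            filter_upwards [Ioi_mem_nhds (show 2 < x by linarith)] with z hz
            exact h2 z (le_of_lt hz)
          rw [this.deriv_eq]; simp
      rw [this]; simp; linarith
  have := Convex.norm_image_sub_le_of_norm_deriv_le (f := ψ) (s := Set.univ) (x := y) (y := x)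
    (C := K + 1) (fun z _ => (hs.differentiable (by simp)) z) (fun z _ => hall z) convex_univ
    trivial trivial
  simpa using this

lemma xih_lip (x y : E3) : |xih x - xih y| ≤ ‖x - y‖ := by
  have e : ∀ z : E3, xih z = ‖(!₂[z 0, z 1] : EuclideanSpace ℝ (Fin 2))‖ := by
    intro z
    rw [EuclideanSpace.norm_eq, Fin.sum_univ_two]
    simp [xih]
  rw [e, e]
  refine (abs_norm_sub_norm_le _ _).trans ?_
  rw [EuclideanSpace.norm_eq, EuclideanSpace.norm_eq, Fin.sum_univ_two, Fin.sum_univ_three]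
  apply Real.sqrt_le_sqrt
  simp
  positivity

lemma coord_lip (x y : E3) : |x 2 - y 2| ≤ ‖x - y‖ := by
  have := PiLp.norm_apply_le (x - y) 2
  simpa using this

lemma Psi_fderiv_bound (ψ : ℝ → ℝ) (hψ : IsCutoff ψ) (K : ℝ) (hK : 0 < K)
    (hL : ∀ x y, |ψ x - ψ y| ≤ K * |x - y|) (r R : ℝ) (hr : 0 < r) (hr1 : r ≤ 1) (hR : 1 ≤ R)
    (ξ : E3) : ‖fderiv ℝ (Psi ψ r R) ξ (EuclideanSpace.single 1 1)‖ ≤ 3 * K * r⁻¹ := by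
  have hR0 : 0 < R := by linarith
  have hlip : LipschitzWith (3 * K * r⁻¹).toNNReal (Psi ψ r R) := by
    apply LipschitzWith.of_dist_le_mul
    intro x y
    rw [Real.coe_toNNReal _ (by positivity), Real.dist_eq, dist_eq_norm]
    have step : ∀ (s a b d : ℝ), r ≤ s → |a - b| ≤ d → |ψ (a / s) - ψ (b / s)| ≤ K * r⁻¹ * d := by
      intro s a b d hs hd
      refine (hL _ _).trans ?_
      rw [← sub_div, abs_div, abs_of_pos (show 0 < s by linarith), div_eq_mul_inv, mul_assoc,
        mul_comm r⁻¹]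
      have hd0 : 0 ≤ d := (abs_nonneg _).trans hd
      have hsi : s⁻¹ ≤ r⁻¹ := inv_anti₀ hr hs
      have hs0 : 0 ≤ s⁻¹ := by have : 0 < s := by linarith
                               positivity
      exact mul_le_mul_of_nonneg_left (mul_le_mul hd hsi hs0 hd0) hK.le
    have a1 := step R ‖x‖ ‖y‖ ‖x - y‖ (by linarith) (abs_norm_sub_norm_le _ _)
    have a2 := step r (xih x) (xih y) ‖x - y‖ le_rfl (xih_lip _ _)
    have a3 := step r |x 2| |y 2| ‖x - y‖ le_rfl ((abs_abs_sub_abs_le _ _).trans (coord_lip x y))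
    unfold Psi
    have b1 := hψ.2.1 (‖x‖ / R)
    have c1 := hψ.2.1 (‖y‖ / R)
    have b2 := hψ.2.1 (xih x / r)
    have c2 := hψ.2.1 (xih y / r)
    have b3 := hψ.2.1 (|x 2| / r)
    have c3 := hψ.2.1 (|y 2| / r)
    generalize ψ (‖x‖ / R) = u at *
    generalize ψ (‖y‖ / R) = u' at *
    generalize ψ (xih x / r) = v at *
    generalize ψ (xih y / r) = v' at *
    generalize ψ (|x 2| / r) = w at *
    generalize ψ (|y 2| / r) = w' at *
    have hid : u * ((1 - v) * (1 - w)) - u' * ((1 - v') * (1 - w')) =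
      (u - u') * ((1 - v) * (1 - w)) + (-(u' * (1 - w))) * (v - v') + (-(u' * (1 - v'))) * (w - w') := by
      ring
    obtain ⟨b1, b1'⟩ := b1
    obtain ⟨b2, b2'⟩ := b2
    obtain ⟨b3, b3'⟩ := b3
    obtain ⟨c1, c1'⟩ := c1
    obtain ⟨c2, c2'⟩ := c2
    obtain ⟨c3, c3'⟩ := c3
    have bd : ∀ a b : ℝ, 0 ≤ a → a ≤ 1 → 0 ≤ b → b ≤ 1 → |a * b| ≤ 1 := by
      intro a b h1 h2 h3 h4
      rw [abs_of_nonneg (by positivity)]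
      exact mul_le_one₀ h2 h3 h4
    have d1 := bd (1 - v) (1 - w) (by linarith) (by linarith) (by linarith) (by linarith)
    have d2 := bd u' (1 - w) (by linarith) (by linarith) (by linarith) (by linarith)
    have d3 := bd u' (1 - v') (by linarith) (by linarith) (by linarith) (by linarith)
    rw [hid]
    refine (abs_add_three _ _ _).trans ?_
    rw [abs_mul, abs_mul (-(u' * (1 - w))), abs_mul (-(u' * (1 - v'))), abs_neg, abs_neg]
    have f1 := mul_le_of_le_one_right (abs_nonneg (u - u')) d1
    have f2 := mul_le_of_le_one_left (abs_nonneg (v - v')) d2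
    have f3 := mul_le_of_le_one_left (abs_nonneg (w - w')) d3
    linarith
  have h1 := norm_fderiv_le_of_lipschitz ℝ hlip (x₀ := ξ)
  rw [Real.coe_toNNReal _ (by positivity)] at h1
  have h2 := (fderiv ℝ (Psi ψ r R) ξ).le_opNorm (EuclideanSpace.single 1 1)
  simp at h2
  exact h2.trans h1

lemma Psi_zero_near (ψ : ℝ → ℝ) (hψ : IsCutoff ψ) (r R : ℝ) (hr : 0 < r) (hR : 1 ≤ R) (ξ : E3)
    (h : ¬ (‖ξ‖ ≤ 2 * R ∧ r ≤ xih ξ ∧ r ≤ |ξ 2|)) :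
    Psi ψ r R =ᶠ[nhds ξ] fun _ => 0 := by
  have hR0 : 0 < R := by linarith
  have cx : Continuous xih := by unfold xih; fun_prop
  have c2 : Continuous (fun ξ : E3 => |ξ 2|) := by fun_prop
  rw [not_and_or, not_and_or, not_le, not_le, not_le] at h
  rcases h with h | h | h
  · filter_upwards [(isOpen_lt continuous_const continuous_norm).mem_nhds h] with z hz
    have : ψ (‖z‖ / R) = 0 := hψ.2.2.2 _ (by rw [le_div_iff₀ hR0]; exact le_of_lt hz)
    simp [Psi, this]
  · filter_upwards [(isOpen_lt cx continuous_const).mem_nhds h] with z hz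
    have : ψ (xih z / r) = 1 := hψ.2.2.1 _ (by rw [div_le_one hr]; exact le_of_lt hz)
    simp [Psi, this]
  · filter_upwards [(isOpen_lt c2 continuous_const).mem_nhds h] with z hz
    have : ψ (|z 2| / r) = 1 := hψ.2.2.1 _ (by rw [div_le_one hr]; exact le_of_lt hz)
    simp [Psi, this]

/-- For `0 < r ≤ 1 ≤ R`, `τ > 0` and each phase `λ = λ_{ε₁,ε₂}`,
`|M(τ,ξ)| ≤ C r^{−1}/(1 + R^{−6} r² τ ξ₂²)` for all `ξ` with `ξ_h ≠ 0`, where `C`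
depends only on `γ̄` and `ψ`. -/
theorem Mker_bound (γ : ℝ) (hγ : 0 < γ) (ψ : ℝ → ℝ) (hψ : IsCutoff ψ) :
    ∃ C : ℝ, 0 < C ∧
      ∀ r R τ : ℝ, 0 < r → r ≤ 1 → 1 ≤ R → 0 < τ →
      ∀ ε1 ε2 : ℝ, (ε1 = 1 ∨ ε1 = -1) → (ε2 = 1 ∨ ε2 = -1) →
      ∀ ξ : E3, ¬(ξ 0 = 0 ∧ ξ 1 = 0) →
        ‖Mker ψ r R γ ε1 ε2 τ ξ‖ ≤
          C * r⁻¹ / (1 + R ^ (-(6:ℝ)) * r ^ 2 * τ * (ξ 1) ^ 2) := by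
  obtain ⟨K, hK, hL⟩ := cutoff_lip ψ hψ
  have hD : 0 < 1 + 2 * γ := by positivity
  set c : ℝ := (γ / (1 + 2 * γ)) ^ 6 with hc
  have hc0 : 0 < c := by positivity
  have hc1 : c ≤ 1 := by
    apply pow_le_one₀ (by positivity)
    rw [div_le_one hD]; linarith
  refine ⟨(1 + γ + 3 * K * γ) * c⁻¹, by positivity, ?_⟩
  intro r R τ hr hr1 hR hτ ε1 ε2 h1 h2 ξ _
  have hR0 : 0 < R := by linarith
  have hRp : R ^ (-(6:ℝ)) = (R ^ 6)⁻¹ := by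
    rw [Real.rpow_neg hR0.le]
    norm_cast
  rw [hRp]
  by_cases hS : ‖ξ‖ ≤ 2 * R ∧ r ≤ xih ξ ∧ r ≤ |ξ 2|
  swap
  · have hz := Psi_zero_near ψ hψ r R hr hR ξ hS
    have e1 : Psi ψ r R ξ = 0 := hz.eq_of_nhds
    have e2 : fderiv ℝ (Psi ψ r R) ξ = 0 := by rw [hz.fderiv_eq]; simp
    have e3 : Mker ψ r R γ ε1 ε2 τ ξ = 0 := by simp [Mker, e1, e2]
    rw [e3, norm_zero]
    positivity
  obtain ⟨s1, s2, s3⟩ := hS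
  have hlow := aLam_lower γ hγ r R hr hr1 hR ε1 ε2 h1 h2 ξ s1 s2 s3
  have hup := aLam_upper γ hγ ε1 ε2 h1 h2 ξ
  have hda := fderiv_aLam_bound γ hγ r hr ε1 ε2 h1 h2 ξ s2
  have hdP := Psi_fderiv_bound ψ hψ K hK hL r R hr hr1 hR ξ
  have hP : ‖((Psi ψ r R ξ : ℝ) : ℂ)‖ ≤ 1 := by
    rw [Complex.norm_real, Real.norm_eq_abs, abs_le]
    have b1 := hψ.2.1 (‖ξ‖ / R)
    have b2 := hψ.2.1 (xih ξ / r)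
    have b3 := hψ.2.1 (|ξ 2| / r)
    have n1 : 0 ≤ (1 - ψ (xih ξ / r)) * (1 - ψ (|ξ 2| / r)) :=
      mul_nonneg (by linarith [b2.2]) (by linarith [b3.2])
    have n2 : (1 - ψ (xih ξ / r)) * (1 - ψ (|ξ 2| / r)) ≤ 1 :=
      mul_le_one₀ (by linarith [b2.1]) (by linarith [b3.2]) (by linarith [b3.1])
    have n3 : 0 ≤ Psi ψ r R ξ := mul_nonneg b1.1 n1
    have n4 : Psi ψ r R ξ ≤ 1 := mul_le_one₀ b1.2 n1 n2
    exact ⟨by linarith, n4⟩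
  have hX : c * ((R ^ 6)⁻¹ * r ^ 2 * τ * (ξ 1) ^ 2) ≤ τ * ‖aLam γ ε1 ε2 ξ‖ ^ 2 := by
    have := pow_le_pow_left₀ (by positivity) hlow 2
    calc c * ((R ^ 6)⁻¹ * r ^ 2 * τ * (ξ 1) ^ 2)
        = τ * ((γ / (1 + 2 * γ)) ^ 3 * (r / R ^ 3) * |ξ 1|) ^ 2 := by
          rw [mul_pow, sq_abs, hc]; field_simp
      _ ≤ _ := by gcongr
  have hX0 : 0 ≤ (R ^ 6)⁻¹ * r ^ 2 * τ * (ξ 1) ^ 2 := by positivity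
  have hT0 : 0 ≤ τ * ‖aLam γ ε1 ε2 ξ‖ ^ 2 := by positivity
  unfold Mker
  generalize (R ^ 6)⁻¹ * r ^ 2 * τ * (ξ 1) ^ 2 = X at *
  generalize fderiv ℝ (aLam γ ε1 ε2) ξ (EuclideanSpace.single 1 1) = da at *
  generalize fderiv ℝ (Psi ψ r R) ξ (EuclideanSpace.single 1 1) = dP at *
  generalize τ * ‖aLam γ ε1 ε2 ξ‖ ^ 2 = T at *
  generalize aLam γ ε1 ε2 ξ = a at *
  generalize Psi ψ r R ξ = P at *
  have hri : 1 ≤ r⁻¹ := (one_le_inv₀ hr).mpr hr1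
  have t1 : ‖((1 / (1 + T) : ℝ) : ℂ)‖ = 1 / (1 + T) := by
    rw [Complex.norm_real, Real.norm_eq_abs, abs_of_pos (by positivity)]
  have t2 : ‖(((1 - T) / (1 + T) ^ 2 : ℝ) : ℂ)‖ ≤ 1 / (1 + T) := by
    rw [Complex.norm_real, Real.norm_eq_abs, abs_div, abs_of_pos (by positivity : 0 < (1 + T) ^ 2),
      div_le_div_iff₀ (by positivity) (by positivity)]
    have : |1 - T| ≤ 1 + T := abs_le.mpr ⟨by linarith, by linarith⟩
    nlinarith
  have t3 : ‖(((1 + T : ℝ)) : ℂ)‖ = 1 + T := by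
    rw [Complex.norm_real, Real.norm_eq_abs, abs_of_pos (by positivity)]
  have t4 : ‖((dP : ℝ) : ℂ)‖ ≤ 3 * K * r⁻¹ := by
    rw [Complex.norm_real]; exact hdP
  refine (norm_add_le _ _).trans ?_
  have u1 : ‖(((1 / (1 + T) : ℝ) : ℂ) + Complex.I * da * (((1 - T) / (1 + T) ^ 2 : ℝ) : ℂ)) * ((P : ℝ) : ℂ)‖
      ≤ 1 / (1 + T) + γ * r⁻¹ * (1 / (1 + T)) := by
    rw [norm_mul]
    refine (mul_le_of_le_one_right (norm_nonneg _) hP).trans ((norm_add_le _ _).trans ?_)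
    rw [t1, norm_mul, norm_mul, Complex.norm_I, one_mul]
    gcongr
  have u2 : ‖Complex.I * a / (((1 + T : ℝ)) : ℂ) * ((dP : ℝ) : ℂ)‖ ≤ γ / (1 + T) * (3 * K * r⁻¹) := by
    rw [norm_mul, norm_div, norm_mul, Complex.norm_I, one_mul, t3]
    gcongr
  have u3 : 1 / (1 + T) ≤ c⁻¹ / (1 + X) := by
    rw [div_le_div_iff₀ (by positivity) (by positivity)]
    have : c * (1 + X) ≤ 1 + T := by nlinarith
    calc 1 * (1 + X) = c⁻¹ * (c * (1 + X)) := by field_simp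
      _ ≤ _ := by gcongr
  calc _ ≤ 1 / (1 + T) + γ * r⁻¹ * (1 / (1 + T)) + γ / (1 + T) * (3 * K * r⁻¹) := add_le_add u1 u2
    _ = (1 + γ * r⁻¹ + 3 * K * γ * r⁻¹) * (1 / (1 + T)) := by ring
    _ ≤ (r⁻¹ + γ * r⁻¹ + 3 * K * γ * r⁻¹) * (c⁻¹ / (1 + X)) := by gcongr
    _ = _ := by ring
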